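/- arXiv:1402.5384 — 2 statements merged into one kernel-verified Lean document; each statement's English description precedes it below -/
import Mathlib

section
/- Let I ≥ 2, J ≥ 2, let ν = (ν_1,...,ν_I)^T and π = (π_1,...,π_J)^T be probability vectors with all entries positive, with truncations ν* = (ν_1,...,ν_{I-1})^T and π* = (π_1,...,π_{J-1})^T. Let R be the (I-1)(J-1) × I(J-1) matrix R = (0_{(I-1)(J-1)×(J-1)} , G_{I-1} ⊗ G_{J-1}) (a zero block followed by the Kronecker product). Let I_F be the I(J-1) × I(J-1) matrix I_F = M ⊗ (D_{π*} − π* π*^T), where M is the I × I matrix with (1,1)-entry 1, first row (after the corner) ν*^T, first column (after the corner) ν*, and lower-right block D_{ν*}. Then I_F is invertible and R I_F^{-1} R^T = K(ν) ⊗ K(π), where K(q) = G_{K-1} D_{q*}^{-1} G_{K-1}^T + (1/q_K) e_{K-1} e_{K-1}^T for a probability vector q of length K with truncation q*. -/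
open Matrix
open scoped Kronecker

/-- `G_h`: the h×h matrix with 1's on the diagonal, −1's on the superdiagonal. -/
def Gmat (h : ℕ) : Matrix (Fin h) (Fin h) ℝ :=
  Matrix.of fun i j => if i = j then 1 else if (j : ℕ) = (i : ℕ) + 1 then -1 else 0

/-- `e_{K-1}`: the last standard unit vector of ℝ^{K-1}. -/
def lastUnitVec (h : ℕ) : Fin h → ℝ := fun i => if (i : ℕ) + 1 = h then 1 else 0

/-- `K(q) = G_{K-1} D_{q*}⁻¹ G_{K-1}ᵀ + (1/q_K) e_{K-1} e_{K-1}ᵀ`. -/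
noncomputable def Kmat {K : ℕ} (q : Fin (K + 1) → ℝ) : Matrix (Fin K) (Fin K) ℝ :=
  Gmat K * Matrix.diagonal (fun j : Fin K => (q j.castSucc)⁻¹) * (Gmat K)ᵀ +
    (1 / q (Fin.last K)) • Matrix.vecMulVec (lastUnitVec K) (lastUnitVec K)

/-! With `q*` the truncation of `q`, the key matrix is the multinomial covariance
`D_{q*} − q* q*ᵀ`. By Sherman–Morrison its inverse is `D_{q*}⁻¹ + q_K⁻¹ 1 1ᵀ`, and `G` maps the
all-ones vector to the last unit vector, so `G (D_{q*} − q* q*ᵀ)⁻¹ Gᵀ = K(q)`. The same matrix,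
for `q = ν`, is the Schur complement of the corner of `M`, hence its inverse is the lower-right
block of `M⁻¹`, which is the only block that `(0 | G)` sees. Since `R = (0 | G_{I-1}) ⊗ G_{J-1}`,
everything factors through the Kronecker product. -/

section BlockMatrices

variable {l m n o r α : Type*}

lemma fromCols_zero_kronecker [MulZeroClass α] (A : Matrix l n α) (B : Matrix m o α) :
    fromCols (0 : Matrix l r α) A ⊗ₖ B = Matrix.of fun p c =>
      Sum.elim (fun _ => (0 : α)) (fun i => (A ⊗ₖ B) p (i, c.2)) c.1 := by
  ext p ⟨i | i, j⟩ <;> simp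

variable [Fintype m] [Fintype n]

lemma fromCols_zero_mul_mul_transpose [Semiring α] (G : Matrix l n α)
    (N : Matrix (m ⊕ n) (m ⊕ n) α) :
    fromCols (0 : Matrix l m α) G * N * (fromCols (0 : Matrix l m α) G)ᵀ =
      G * N.toBlocks₂₂ * Gᵀ := by
  rw [← fromBlocks_toBlocks N]
  simp only [toBlocks_fromBlocks₂₂, fromCols_mul_fromBlocks, transpose_fromCols,
    fromCols_mul_fromRows, transpose_zero, Matrix.zero_mul, Matrix.mul_zero, zero_add]

variable [DecidableEq m] [DecidableEq n] [CommRing α]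

lemma toBlocks₂₂_inv_fromBlocks {A : Matrix m m α} {B : Matrix m n α} {C : Matrix n m α}
    {D : Matrix n n α} (hA : IsUnit A) (hS : IsUnit (D - C * A⁻¹ * B)) :
    (fromBlocks A B C D)⁻¹.toBlocks₂₂ = (D - C * A⁻¹ * B)⁻¹ := by
  cases hA.nonempty_invertible
  rw [← invOf_eq_nonsing_inv A] at hS ⊢
  cases hS.nonempty_invertible
  let := fromBlocks₁₁Invertible A B C D
  rw [← invOf_eq_nonsing_inv, ← invOf_eq_nonsing_inv, invOf_fromBlocks₁₁_eq,
    toBlocks_fromBlocks₂₂]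

end BlockMatrices

section Multinomial

variable {n R : Type*} [DecidableEq n] [CommRing R]

/-- The matrix `D_p − p pᵀ`: the covariance matrix of one multinomial trial, where `p` lists the
probabilities of all the categories but one. -/
def multinomialCov (p : n → R) : Matrix n n R :=
  diagonal p - vecMulVec p p

/-- The matrix with corner `1`, first row `pᵀ`, first column `p` and lower-right block `D_p`; the
matrix `M` of the theorem is the case `p = ν*`. -/
def borderedDiagonal (p : n → R) : Matrix (Unit ⊕ n) (Unit ⊕ n) R :=
  fromBlocks 1 (replicateRow Unit p) (replicateCol Unit p) (diagonal p)

lemma schurComplement_borderedDiagonal (p : n → R) :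
    diagonal p - replicateCol Unit p * (1 : Matrix Unit Unit R)⁻¹ * replicateRow Unit p =
      multinomialCov p := by
  rw [inv_one, Matrix.mul_one, ← vecMulVec_eq, multinomialCov]

variable [Fintype n] {p : n → R}

lemma isUnit_borderedDiagonal (h : IsUnit (multinomialCov p)) : IsUnit (borderedDiagonal p) := by
  let := invertibleOne (α := Matrix Unit Unit R)
  rwa [borderedDiagonal, isUnit_fromBlocks_iff_of_invertible₁₁, invOf_eq_nonsing_inv,
    schurComplement_borderedDiagonal]

lemma toBlocks₂₂_inv_borderedDiagonal (h : IsUnit (multinomialCov p)) :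
    (borderedDiagonal p)⁻¹.toBlocks₂₂ = (multinomialCov p)⁻¹ := by
  rw [← schurComplement_borderedDiagonal] at h ⊢
  exact toBlocks₂₂_inv_fromBlocks isUnit_one h

lemma multinomialCov_mulVec_one {c : R} (hsum : ∑ i, p i + c = 1) :
    multinomialCov p *ᵥ 1 = c • p := by
  ext i
  calc (multinomialCov p *ᵥ 1) i = p i * (1 - ∑ j, p j) := by
        simp [multinomialCov, sub_mulVec, vecMulVec_mulVec, mulVec_diagonal, mul_sub,
          dotProduct_one]
    _ = c * p i := by rw [← hsum, add_sub_cancel_left, mul_comm]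

end Multinomial

section MultinomialInverse

variable {n F : Type*} [DecidableEq n] [Fintype n] [Field F] {p : n → F} {c : F}

lemma multinomialCov_mul_diagonal_inv (hp : ∀ i, p i ≠ 0) :
    multinomialCov p * diagonal (fun i => (p i)⁻¹) = 1 - vecMulVec p 1 := by
  have vecMul_diagonal_inv : p ᵥ* diagonal (fun i => (p i)⁻¹) = 1 := by
    ext i; simp [vecMul_diagonal, hp]
  rw [multinomialCov, Matrix.sub_mul, vecMulVec_mul, vecMul_diagonal_inv]
  simp [hp]

lemma multinomialCov_mul_diagonal_inv_add (hp : ∀ i, p i ≠ 0) (hc : c ≠ 0)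
    (hsum : ∑ i, p i + c = 1) :
    multinomialCov p * (diagonal (fun i => (p i)⁻¹) + (1 / c) • vecMulVec 1 1) = 1 := by
  rw [Matrix.mul_add, multinomialCov_mul_diagonal_inv hp, Matrix.mul_smul, mul_vecMulVec,
    multinomialCov_mulVec_one hsum, smul_vecMulVec, smul_smul, one_div_mul_cancel hc, one_smul,
    sub_add_cancel]

lemma isUnit_multinomialCov (hp : ∀ i, p i ≠ 0) (hc : c ≠ 0) (hsum : ∑ i, p i + c = 1) :
    IsUnit (multinomialCov p) :=
  .of_mul_eq_one _ (multinomialCov_mul_diagonal_inv_add hp hc hsum)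

lemma inv_multinomialCov (hp : ∀ i, p i ≠ 0) (hc : c ≠ 0) (hsum : ∑ i, p i + c = 1) :
    (multinomialCov p)⁻¹ = diagonal (fun i => (p i)⁻¹) + (1 / c) • vecMulVec 1 1 :=
  inv_eq_right_inv (multinomialCov_mul_diagonal_inv_add hp hc hsum)

lemma isUnit_multinomialCov_init {K : ℕ} {q : Fin (K + 1) → F} (hq : ∀ i, q i ≠ 0)
    (hsum : ∑ i, q i = 1) : IsUnit (multinomialCov (Fin.init q)) :=
  isUnit_multinomialCov (fun i => hq i.castSucc) (hq (Fin.last K))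
    (by rwa [Fin.sum_univ_castSucc] at hsum)

end MultinomialInverse

lemma Gmat_apply_eq_sub {h : ℕ} (i j : Fin h) :
    Gmat h i j = (if i = j then 1 else 0) - if (i : ℕ) + 1 = j then 1 else 0 := by
  rw [Gmat, Matrix.of_apply]
  grind

lemma Gmat_mulVec_one (h : ℕ) : Gmat h *ᵥ 1 = lastUnitVec h := by
  ext i
  have sum_superdiagonal :
      ∑ j : Fin h, (if (i : ℕ) + 1 = j then (1 : ℝ) else 0) =
        if (i : ℕ) + 1 < h then 1 else 0 := by
    rw [Fin.sum_univ_eq_sum_range (fun j => if (i : ℕ) + 1 = j then (1 : ℝ) else 0)]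
    simp
  have last_or_lt : (i : ℕ) + 1 = h ∨ (i : ℕ) + 1 < h := by lia
  simp only [mulVec, dotProduct_one, Gmat_apply_eq_sub, Finset.sum_sub_distrib, Finset.sum_ite_eq,
    Finset.mem_univ, if_true, sum_superdiagonal, lastUnitVec]
  grind

lemma Gmat_mul_inv_multinomialCov_mul_transpose {K : ℕ} {q : Fin (K + 1) → ℝ}
    (hq : ∀ i, q i ≠ 0) (hsum : ∑ i, q i = 1) :
    Gmat K * (multinomialCov (Fin.init q))⁻¹ * (Gmat K)ᵀ = Kmat q := by
  rw [Fin.sum_univ_castSucc] at hsum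
  rw [inv_multinomialCov (p := Fin.init q) (fun i => hq i.castSucc) (hq (Fin.last K)) hsum]
  simp only [Kmat, Fin.init, Matrix.mul_add, Matrix.add_mul, Matrix.mul_smul, Matrix.smul_mul,
    mul_vecMulVec, vecMulVec_mul, vecMul_transpose, Gmat_mulVec_one]

theorem stmt5_general (k m : ℕ)
    (ν : Fin (k + 1) → ℝ) (hν : ∀ i, ν i ≠ 0) (hνsum : ∑ i, ν i = 1)
    (pi : Fin (m + 1) → ℝ) (hπ : ∀ j, pi j ≠ 0) (hπsum : ∑ j, pi j = 1)
    (R : Matrix (Fin k × Fin m) ((Unit ⊕ Fin k) × Fin m) ℝ)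
    (hR : R = Matrix.of fun p c =>
        Sum.elim (fun _ => (0 : ℝ)) (fun i' => (Gmat k ⊗ₖ Gmat m) p (i', c.2)) c.1)
    (M : Matrix (Unit ⊕ Fin k) (Unit ⊕ Fin k) ℝ)
    (hM : M = Matrix.fromBlocks 1 (Matrix.of fun _ j => ν j.castSucc)
        (Matrix.of fun i _ => ν i.castSucc) (Matrix.diagonal fun i => ν i.castSucc))
    (IF : Matrix ((Unit ⊕ Fin k) × Fin m) ((Unit ⊕ Fin k) × Fin m) ℝ)
    (hIF : IF = M ⊗ₖ (Matrix.diagonal (fun j : Fin m => pi j.castSucc) -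
        Matrix.vecMulVec (fun j : Fin m => pi j.castSucc) (fun j : Fin m => pi j.castSucc))) :
    IsUnit IF ∧ R * IF⁻¹ * Rᵀ = Kmat ν ⊗ₖ Kmat pi := by
  have hM' : M = borderedDiagonal (Fin.init ν) := hM
  have hIF' : IF = M ⊗ₖ multinomialCov (Fin.init pi) := hIF
  have hR' : R = fromCols (0 : Matrix (Fin k) Unit ℝ) (Gmat k) ⊗ₖ Gmat m := by
    rw [hR, fromCols_zero_kronecker]
  have hνunit := isUnit_multinomialCov_init hν hνsum
  have hπunit := isUnit_multinomialCov_init hπ hπsum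
  subst hM' hIF' hR'
  refine ⟨Matrix.IsUnit.kronecker (isUnit_borderedDiagonal hνunit) hπunit, ?_⟩
  rw [inv_kronecker, ← kroneckerMap_transpose, ← mul_kronecker_mul, ← mul_kronecker_mul,
    fromCols_zero_mul_mul_transpose, toBlocks₂₂_inv_borderedDiagonal hνunit,
    Gmat_mul_inv_multinomialCov_mul_transpose hν hνsum,
    Gmat_mul_inv_multinomialCov_mul_transpose hπ hπsum]

/-- central computation of Theorem 2 of the paper: with
`I = k+1`, `J = m+1`, `R = (0 | G_{I-1} ⊗ G_{J-1})` and
`I_F = M ⊗ (D_{π*} − π* π*ᵀ)`, the Fisher information matrix `I_F` is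
invertible and `R I_F⁻¹ Rᵀ = K(ν) ⊗ K(π)`.  Columns of `I_F` of size
`I(J-1)` are indexed by `(Unit ⊕ Fin k) × Fin m` (the `Unit` block carrying
the nuisance parameters θ₂). -/
theorem stmt5 (k m : ℕ) (hk : 1 ≤ k) (hm : 1 ≤ m)
    (ν : Fin (k + 1) → ℝ) (hνpos : ∀ i, 0 < ν i) (hνsum : ∑ i, ν i = 1)
    (pi : Fin (m + 1) → ℝ) (hπpos : ∀ j, 0 < pi j) (hπsum : ∑ j, pi j = 1)
    -- R = (0_{(I-1)(J-1)×(J-1)} , G_{I-1} ⊗ G_{J-1})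
    (R : Matrix (Fin k × Fin m) ((Unit ⊕ Fin k) × Fin m) ℝ)
    (hR : R = Matrix.of fun p c =>
        Sum.elim (fun _ => (0 : ℝ)) (fun i' => (Gmat k ⊗ₖ Gmat m) p (i', c.2)) c.1)
    -- M : I × I, corner 1, first row ν*ᵀ, first column ν*, lower-right block D_{ν*}
    (M : Matrix (Unit ⊕ Fin k) (Unit ⊕ Fin k) ℝ)
    (hM : M = Matrix.fromBlocks 1 (Matrix.of fun _ j => ν j.castSucc)
        (Matrix.of fun i _ => ν i.castSucc) (Matrix.diagonal fun i => ν i.castSucc))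
    -- I_F = M ⊗ (D_{π*} − π* π*ᵀ)
    (IF : Matrix ((Unit ⊕ Fin k) × Fin m) ((Unit ⊕ Fin k) × Fin m) ℝ)
    (hIF : IF = M ⊗ₖ (Matrix.diagonal (fun j : Fin m => pi j.castSucc) -
        Matrix.vecMulVec (fun j : Fin m => pi j.castSucc) (fun j : Fin m => pi j.castSucc))) :
    IsUnit IF ∧ R * IF⁻¹ * Rᵀ = Kmat ν ⊗ₖ Kmat pi :=
  stmt5_general k m ν (fun i => (hνpos i).ne') hνsum pi (fun j => (hπpos j).ne') hπsum
    R hR M hM IF hIF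
end

section
/- Let k ≥ 1 and let μ be the standard Gaussian measure on ℝ^k (the product of k copies of the standard normal distribution N(0,1)). Let Q be a k×k real symmetric idempotent matrix with rank(Q) = r ≥ 1, and let d_1,...,d_m ∈ ℝ^k be vectors such that for each i, either Q d_i = 0 or Q d_i = d_i. Let C = {y ∈ ℝ^k : ⟨d_i, y⟩ ≥ 0 for all i = 1,...,m} and assume μ(C) > 0. Then for every x ≥ 0, μ({y ∈ C : y^T Q y ≤ x}) / μ(C) = P(χ²_r ≤ x), where χ²_r denotes the chi-square distribution with r degrees of freedom (the Gamma distribution with shape r/2 and rate 1/2). In other words, conditionally on the event C, the quadratic form y^T Q y has a chi-square distribution with rank(Q) degrees of freedom. -/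
open Matrix MeasureTheory ProbabilityTheory

/-!
Let `K` be the range of `Q`, so that `Q` is the orthogonal projection onto `K` and `yᵀ Q y` is the
squared norm of the component of `y` in `K`. Every constraint `⟨dᵢ, y⟩ ≥ 0` involves only one of the
components of `y` in `K` and `Kᗮ`, and these are independent standard Gaussian vectors. The
constraints on the `Kᗮ`-component therefore factor out, and those on the `K`-component cut out a
cone in `K`. In polar coordinates, the norm of a standard Gaussian vector is independent of
membership in a cone, because such membership depends only on the direction; the substitution
`t = ‖z‖²` turns the radial density into that of the chi-square law.
-/

section

open Set Module Metric
open scoped ENNReal RealInnerProductSpace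

/-- A set stable under multiplication by positive scalars, i.e. a cone that need be neither convex
nor contain the origin. -/
def IsPosCone {E : Type*} [SMul ℝ E] (S : Set E) : Prop :=
  ∀ ⦃c : ℝ⦄, 0 < c → ∀ ⦃x⦄, x ∈ S → c • x ∈ S

lemma IsPosCone.smul_mem_iff {E : Type*} [MulAction ℝ E] {S : Set E} (hS : IsPosCone S)
    {c : ℝ} (hc : 0 < c) {x : E} : c • x ∈ S ↔ x ∈ S :=
  ⟨fun h ↦ by simpa [smul_smul, hc.ne'] using hS (inv_pos.2 hc) h, fun h ↦ hS hc h⟩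

lemma lintegral_volumeIoiPow (n : ℕ) {f : ℝ → ℝ≥0∞} (hf : Measurable f) :
    ∫⁻ r, f r ∂Measure.volumeIoiPow n = ∫⁻ r in Ioi (0 : ℝ), ENNReal.ofReal (r ^ n) * f r := by
  rw [Measure.volumeIoiPow, lintegral_withDensity_eq_lintegral_mul _ (by fun_prop) (by fun_prop),
    ← lintegral_subtype_comap measurableSet_Ioi]
  rfl

lemma lintegral_Ioi_pow_mul_comp_sq {n : ℕ} (hn : n ≠ 0) (g : ℝ → ℝ≥0∞) :
    ∫⁻ r in Ioi (0 : ℝ), ENNReal.ofReal (r ^ (n - 1)) * g (r ^ 2) =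
      2⁻¹ * ∫⁻ t in Ioi (0 : ℝ), ENNReal.ofReal (t ^ ((n : ℝ) / 2 - 1)) * g t := by
  have himage : (· ^ 2) '' Ioi (0 : ℝ) = Ioi 0 := by
    ext t
    exact ⟨fun ⟨r, hr, h⟩ ↦ h ▸ mem_Ioi.2 (pow_pos hr 2),
      fun ht ↦ ⟨√t, Real.sqrt_pos.2 ht, Real.sq_sqrt (le_of_lt ht)⟩⟩
  have hinj : InjOn (· ^ 2) (Ioi (0 : ℝ)) := fun r hr s hs h ↦
    (pow_left_inj₀ (le_of_lt hr) (le_of_lt hs) two_ne_zero).1 h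
  have hjac (r : ℝ) (hr : 0 < r) : |2 * r| * (r ^ 2) ^ ((n : ℝ) / 2 - 1) = 2 * r ^ (n - 1) := by
    have hpow : r ^ (n - 1) = r ^ (2 * ((n : ℝ) / 2 - 1)) * r := by
      rw [← Real.rpow_add_one hr.ne', ← Real.rpow_natCast, Nat.cast_pred (Nat.pos_of_ne_zero hn)]
      ring_nf
    rw [abs_of_pos (by positivity), hpow, ← Real.rpow_natCast_mul hr.le, Nat.cast_ofNat]
    ring
  have hsubst := lintegral_image_eq_lintegral_abs_deriv_mul measurableSet_Ioi
    (fun r _ ↦ by simpa using (hasDerivAt_pow 2 r).hasDerivWithinAt) hinj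
    fun t ↦ ENNReal.ofReal (t ^ ((n : ℝ) / 2 - 1)) * g t
  rw [himage] at hsubst
  rw [hsubst, ← lintegral_const_mul' _ _ (by simp)]
  refine setLIntegral_congr_fun measurableSet_Ioi fun r hr ↦ ?_
  rw [← mul_assoc (ENNReal.ofReal _), ← ENNReal.ofReal_mul (abs_nonneg _), hjac r hr,
    ENNReal.ofReal_mul two_pos.le, mul_assoc, ENNReal.ofReal_ofNat,
    ENNReal.inv_mul_cancel_left (by simp) (by simp)]

lemma gammaMeasure_apply {a r : ℝ} (ha : 0 < a) (hr : 0 ≤ r) {T : Set ℝ} (hT : MeasurableSet T) :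
    gammaMeasure a r T = ENNReal.ofReal (r ^ a / Real.Gamma a) *
      ∫⁻ t in Ioi (0 : ℝ), ENNReal.ofReal (t ^ (a - 1)) *
        T.indicator (fun t ↦ ENNReal.ofReal (Real.exp (-(r * t)))) t := by
  have hpdf (t : ℝ) : (Ici (0 : ℝ)).indicator
      (fun t ↦ ENNReal.ofReal (r ^ a / Real.Gamma a) * (ENNReal.ofReal (t ^ (a - 1)) *
        T.indicator (fun t ↦ ENNReal.ofReal (Real.exp (-(r * t)))) t)) t =
      T.indicator (gammaPDF a r) t := by
    by_cases ht : 0 ≤ t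
    · by_cases htT : t ∈ T
      · have := Real.Gamma_pos_of_pos ha
        simp only [indicator_of_mem, mem_Ici, ht, htT, gammaPDF_of_nonneg]
        rw [mul_assoc, ENNReal.ofReal_mul (by positivity), ENNReal.ofReal_mul (by positivity)]
      · simp [htT]
    · simp [indicator, ht, gammaPDF_of_neg (not_le.1 ht)]
  rw [gammaMeasure, withDensity_apply _ hT, ← lintegral_indicator hT,
    ← lintegral_const_mul' _ _ (by simp), restrict_Ioi_eq_restrict_Ici,
    ← lintegral_indicator measurableSet_Ici]
  exact lintegral_congr fun t ↦ (hpdf t).symm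

section PolarCoordinates

variable {E : Type*} [NormedAddCommGroup E] [NormedSpace ℝ E] [FiniteDimensional ℝ E]
  [Nontrivial E] [MeasurableSpace E] [BorelSpace E] (μ : Measure E) [μ.IsAddHaarMeasure]

lemma setLIntegral_fun_norm_of_cone {S : Set E} (hS : MeasurableSet S) (hcone : IsPosCone S)
    {f : ℝ → ℝ≥0∞} (hf : Measurable f) :
    ∫⁻ x in S, f ‖x‖ ∂μ = μ.toSphere ((↑) ⁻¹' S) *
      ∫⁻ r in Ioi (0 : ℝ), ENNReal.ofReal (r ^ (finrank ℝ E - 1)) * f r := by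
  have hsphere : MeasurableSet ((↑) ⁻¹' S : Set (sphere (0 : E) 1)) := hS.preimage (by fun_prop)
  have mem_iff (x : ({0}ᶜ : Set E)) :
      ((homeomorphUnitSphereProd E x).1 : E) ∈ S ↔ (x : E) ∈ S := by
    simpa using hcone.smul_mem_iff (inv_pos.2 (norm_pos_iff.2 x.2))
  calc ∫⁻ x in S, f ‖x‖ ∂μ
      = ∫⁻ x : ({0}ᶜ : Set E), S.indicator (fun x ↦ f ‖x‖) x ∂μ.comap (↑) := by
        rw [lintegral_subtype_comap (measurableSet_singleton _).compl,
          restrict_compl_singleton, lintegral_indicator hS]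
    _ = ∫⁻ p, ((↑) ⁻¹' S : Set (sphere (0 : E) 1)).indicator 1 p.1 * f p.2
          ∂μ.toSphere.prod (.volumeIoiPow (finrank ℝ E - 1)) := by
        rw [← μ.measurePreserving_homeomorphUnitSphereProd.lintegral_comp_emb
          (Homeomorph.measurableEmbedding _)]
        refine lintegral_congr fun x ↦ ?_
        by_cases hx : (x : E) ∈ S
        · rw [indicator_of_mem hx, indicator_of_mem (by exact (mem_iff x).2 hx)]
          simp
        · rw [indicator_of_notMem hx, indicator_of_notMem (by exact mt (mem_iff x).1 hx), zero_mul]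
    _ = _ := by
        rw [lintegral_prod_mul (measurable_one.indicator hsphere).aemeasurable
          (g := fun r : Ioi (0 : ℝ) ↦ f r) (by fun_prop), lintegral_indicator_one hsphere,
          lintegral_volumeIoiPow _ hf]

lemma setLIntegral_fun_norm_sq_of_cone {S : Set E} (hS : MeasurableSet S) (hcone : IsPosCone S)
    {g : ℝ → ℝ≥0∞} (hg : Measurable g) :
    ∫⁻ x in S, g (‖x‖ ^ 2) ∂μ = μ.toSphere ((↑) ⁻¹' S) * 2⁻¹ *
      ∫⁻ t in Ioi (0 : ℝ), ENNReal.ofReal (t ^ ((finrank ℝ E : ℝ) / 2 - 1)) * g t := by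
  rw [setLIntegral_fun_norm_of_cone μ hS hcone (f := fun r ↦ g (r ^ 2)) (by fun_prop),
    lintegral_Ioi_pow_mul_comp_sq finrank_pos.ne', mul_assoc]

end PolarCoordinates

section StdGaussian

variable {E : Type*} [NormedAddCommGroup E] [InnerProductSpace ℝ E] [FiniteDimensional ℝ E]
  [MeasurableSpace E] [BorelSpace E]

lemma integrable_exp_neg_mul_norm_sq {b : ℝ} (hb : 0 < b) :
    Integrable fun x : E ↦ Real.exp (-(b * ‖x‖ ^ 2)) := by
  have := (GaussianFourier.integrable_cexp_neg_mul_sq_norm_add (b := b) (by simpa) 0 (0 : E)).norm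
  simpa [Complex.norm_exp, ← Complex.ofReal_pow] using this

lemma integral_cexp_neg_half_mul_norm_sq_add_inner (t : E) :
    ∫ x : E, Complex.exp (-(1 / 2) * ‖x‖ ^ 2 + Complex.I * ⟪t, x⟫) =
      ((2 * Real.pi) ^ (finrank ℝ E / 2 : ℝ) : ℝ) * Complex.exp (-‖t‖ ^ 2 / 2) := by
  rw [GaussianFourier.integral_cexp_neg_mul_sq_norm_add (by norm_num),
    Complex.ofReal_cpow (by positivity), div_div_eq_mul_div]
  norm_num [mul_comm]

lemma stdGaussian_eq_withDensity :
    stdGaussian E = (volume : Measure E).withDensity fun x ↦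
      ENNReal.ofReal
        ((2 * Real.pi) ^ (-(finrank ℝ E / 2 : ℝ)) * Real.exp (-(1 / 2 * ‖x‖ ^ 2))) := by
  have : IsFiniteMeasure ((volume : Measure E).withDensity fun x ↦
      ENNReal.ofReal ((2 * Real.pi) ^ (-(finrank ℝ E / 2 : ℝ)) * Real.exp (-(1 / 2 * ‖x‖ ^ 2)))) :=
    isFiniteMeasure_withDensity_ofReal ((integrable_exp_neg_mul_norm_sq one_half_pos).const_mul _).2
  refine Measure.ext_of_charFun (funext fun t ↦ ?_)
  rw [charFun_stdGaussian, charFun_apply,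
    integral_withDensity_eq_integral_toReal_smul (by fun_prop) (by simp)]
  have hintegrand (x : E) :
      (ENNReal.ofReal ((2 * Real.pi) ^ (-(finrank ℝ E / 2 : ℝ)) *
        Real.exp (-(1 / 2 * ‖x‖ ^ 2)))).toReal • Complex.exp (⟪x, t⟫ * Complex.I) =
      ((2 * Real.pi) ^ (-(finrank ℝ E / 2 : ℝ)) : ℝ) *
        Complex.exp (-(1 / 2) * ‖x‖ ^ 2 + Complex.I * ⟪t, x⟫) := by
    rw [ENNReal.toReal_ofReal (by positivity), Complex.real_smul, Complex.ofReal_mul,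
      Complex.ofReal_exp, mul_assoc, ← Complex.exp_add, real_inner_comm]
    push_cast
    ring_nf
  simp_rw [hintegrand]
  rw [integral_const_mul, integral_cexp_neg_half_mul_norm_sq_add_inner, ← mul_assoc,
    ← Complex.ofReal_mul, ← Real.rpow_add (by positivity), neg_add_cancel, Real.rpow_zero,
    Complex.ofReal_one, one_mul]

lemma map_orthogonalProjectionOnto_stdGaussian (K : Submodule ℝ E) :
    (stdGaussian E).map K.orthogonalProjectionOnto = stdGaussian K := by
  refine Measure.ext_of_charFun (funext fun t ↦ ?_)
  rw [charFun_apply, integral_map (by fun_prop) (by fun_prop)]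
  have hinner (x : E) : ⟪K.orthogonalProjectionOnto x, t⟫ = ⟪x, (t : E)⟫ := by simp
  simp_rw [hinner, ← charFun_apply, charFun_stdGaussian, Submodule.coe_norm]

lemma indepFun_orthogonalProjectionOnto_stdGaussian (K : Submodule ℝ E) :
    IndepFun K.orthogonalProjectionOnto Kᗮ.orthogonalProjectionOnto (stdGaussian E) := by
  refine HasGaussianLaw.indepFun_of_covariance_inner ?_ fun x y ↦ ?_
  · exact IsGaussian.hasGaussianLaw_id.map
      (K.orthogonalProjectionOnto.prod Kᗮ.orthogonalProjectionOnto)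
  · have hx (z : E) : ⟪x, K.orthogonalProjectionOnto z⟫ = ⟪(x : E), z⟫ := by simp
    have hy (z : E) : ⟪y, Kᗮ.orthogonalProjectionOnto z⟫ = ⟪(y : E), z⟫ := by simp
    simp_rw [hx, hy]
    rw [← covarianceBilin_apply_eq_cov IsGaussian.memLp_two_id, covarianceBilin_stdGaussian]
    exact K.inner_right_of_mem_orthogonal x.2 y.2

lemma stdGaussian_cone_inter_norm_sq_mem_eq_lintegral [Nontrivial E] {S : Set E}
    (hS : MeasurableSet S) (hcone : IsPosCone S) {T : Set ℝ} (hT : MeasurableSet T) :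
    stdGaussian E (S ∩ {x | ‖x‖ ^ 2 ∈ T}) =
      ENNReal.ofReal ((2 * Real.pi) ^ (-(finrank ℝ E / 2 : ℝ))) *
        (volume.toSphere ((↑) ⁻¹' S : Set (sphere (0 : E) 1)) * 2⁻¹) *
          ∫⁻ t in Ioi (0 : ℝ), ENNReal.ofReal (t ^ ((finrank ℝ E : ℝ) / 2 - 1)) *
            T.indicator (fun t ↦ ENNReal.ofReal (Real.exp (-(1 / 2 * t)))) t := by
  have hpre : MeasurableSet {x : E | ‖x‖ ^ 2 ∈ T} := hT.preimage (by fun_prop)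
  rw [mul_assoc, ← setLIntegral_fun_norm_sq_of_cone volume hS hcone (.indicator (by fun_prop) hT),
    ← lintegral_const_mul' _ _ (by simp), stdGaussian_eq_withDensity,
    withDensity_apply _ (hS.inter hpre), inter_comm, ← setLIntegral_indicator hpre]
  refine lintegral_congr fun x ↦ ?_
  by_cases hx : ‖x‖ ^ 2 ∈ T
  · rw [indicator_of_mem hx, indicator_of_mem (by exact hx), ENNReal.ofReal_mul (by positivity)]
  · rw [indicator_of_notMem hx, indicator_of_notMem (by exact hx), mul_zero]

lemma stdGaussian_cone_inter_norm_sq_mem [Nontrivial E] {S : Set E} (hS : MeasurableSet S)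
    (hcone : IsPosCone S) {T : Set ℝ} (hT : MeasurableSet T) :
    stdGaussian E (S ∩ {x | ‖x‖ ^ 2 ∈ T}) =
      stdGaussian E S * gammaMeasure (finrank ℝ E / 2) (1 / 2) T := by
  have hn : (0 : ℝ) < finrank ℝ E / 2 := half_pos (Nat.cast_pos.2 finrank_pos)
  -- The constant `A` need not be evaluated: `U = univ` identifies it as the mass of `S`.
  have hproportional : ∃ A : ℝ≥0∞, ∀ U : Set ℝ, MeasurableSet U →
      stdGaussian E (S ∩ {x | ‖x‖ ^ 2 ∈ U}) = A * gammaMeasure (finrank ℝ E / 2) (1 / 2) U := by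
    have hc : 0 < (1 / 2 : ℝ) ^ (finrank ℝ E / 2 : ℝ) / Real.Gamma (finrank ℝ E / 2) :=
      div_pos (by positivity) (Real.Gamma_pos_of_pos hn)
    refine ⟨ENNReal.ofReal ((2 * Real.pi) ^ (-(finrank ℝ E / 2 : ℝ))) *
      (volume.toSphere ((↑) ⁻¹' S : Set (sphere (0 : E) 1)) * 2⁻¹) *
      (ENNReal.ofReal ((1 / 2) ^ (finrank ℝ E / 2 : ℝ) / Real.Gamma (finrank ℝ E / 2)))⁻¹,
      fun U hU ↦ ?_⟩
    rw [stdGaussian_cone_inter_norm_sq_mem_eq_lintegral hS hcone hU,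
      gammaMeasure_apply hn one_half_pos.le hU, mul_assoc _ (ENNReal.ofReal _)⁻¹,
      ENNReal.inv_mul_cancel_left (ENNReal.ofReal_pos.2 hc).ne' ENNReal.ofReal_ne_top]
  obtain ⟨A, hA⟩ := hproportional
  have := isProbabilityMeasure_gammaMeasure hn (one_half_pos (α := ℝ))
  have hSA : stdGaussian E S = A := by
    simpa only [mem_univ, ofPred_true, inter_univ, measure_univ, mul_one] using hA univ .univ
  rw [hA T hT, hSA]

lemma stdGaussian_inter_norm_sq_orthogonalProjectionOnto_mem {K : Submodule ℝ E} (hK : K ≠ ⊥)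
    {S : Set K} (hS : MeasurableSet S) (hcone : IsPosCone S)
    {R : Set Kᗮ} (hR : MeasurableSet R) {T : Set ℝ} (hT : MeasurableSet T) :
    stdGaussian E (K.orthogonalProjectionOnto ⁻¹' S ∩ Kᗮ.orthogonalProjectionOnto ⁻¹' R ∩
        {y | ‖K.orthogonalProjectionOnto y‖ ^ 2 ∈ T}) =
      stdGaussian E (K.orthogonalProjectionOnto ⁻¹' S ∩ Kᗮ.orthogonalProjectionOnto ⁻¹' R) *
        gammaMeasure (finrank ℝ K / 2) (1 / 2) T := by
  have : Nontrivial K := Submodule.nontrivial_iff_ne_bot.2 hK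
  have hT' : MeasurableSet {z : K | ‖z‖ ^ 2 ∈ T} := hT.preimage (by fun_prop)
  have hmap {U : Set K} (hU : MeasurableSet U) :
      stdGaussian E (K.orthogonalProjectionOnto ⁻¹' U) = stdGaussian K U := by
    rw [← map_orthogonalProjectionOnto_stdGaussian, Measure.map_apply (by fun_prop) hU]
  have hindep {U : Set K} (hU : MeasurableSet U) :=
    (indepFun_orthogonalProjectionOnto_stdGaussian K).measure_inter_preimage_eq_mul U R hU hR
  calc
    _ = stdGaussian E (K.orthogonalProjectionOnto ⁻¹' (S ∩ {z | ‖z‖ ^ 2 ∈ T}) ∩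
          Kᗮ.orthogonalProjectionOnto ⁻¹' R) := by rw [inter_right_comm]; rfl
    _ = _ := by
      rw [hindep (hS.inter hT'), hindep hS, hmap (hS.inter hT'), hmap hS,
        stdGaussian_cone_inter_norm_sq_mem hS hcone hT, mul_right_comm]

lemma setOf_forall_inner_nonneg_eq_preimage_inter_preimage {κ F : Type*}
    [NormedAddCommGroup F] [InnerProductSpace ℝ F] {K : Submodule ℝ F}
    [K.HasOrthogonalProjection] [Kᗮ.HasOrthogonalProjection]
    {d : κ → F} (hd : ∀ i, d i ∈ K ∨ d i ∈ Kᗮ) :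
    {y | ∀ i, 0 ≤ ⟪d i, y⟫} =
      K.orthogonalProjectionOnto ⁻¹' {z | ∀ i : {i // d i ∈ K}, 0 ≤ ⟪⟨d i, i.2⟩, z⟫} ∩
        Kᗮ.orthogonalProjectionOnto ⁻¹' {z | ∀ i : {i // d i ∈ Kᗮ}, 0 ≤ ⟪⟨d i, i.2⟩, z⟫} := by
  ext y
  simp only [mem_inter_iff, mem_preimage, mem_ofPred_eq,
    Submodule.inner_orthogonalProjectionOnto_eq_of_mem_left, Subtype.forall]
  exact ⟨fun h ↦ ⟨fun i _ ↦ h i, fun i _ ↦ h i⟩, fun h i ↦ (hd i).elim (h.1 i) (h.2 i)⟩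

lemma measurableSet_setOf_forall_inner_nonneg {κ F : Type*} [NormedAddCommGroup F]
    [InnerProductSpace ℝ F] [MeasurableSpace F] [OpensMeasurableSpace F] (d : κ → F) :
    MeasurableSet {y | ∀ i, 0 ≤ ⟪d i, y⟫} := by
  rw [ofPred_forall]
  exact (isClosed_iInter fun i ↦ isClosed_le continuous_const (by fun_prop)).measurableSet

lemma stdGaussian_forall_inner_nonneg_and_norm_sq_mem {κ : Type*} {K : Submodule ℝ E} (hK : K ≠ ⊥)
    {d : κ → E} (hd : ∀ i, d i ∈ K ∨ d i ∈ Kᗮ) {T : Set ℝ} (hT : MeasurableSet T) :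
    stdGaussian E {y | (∀ i, 0 ≤ ⟪d i, y⟫) ∧ ‖K.orthogonalProjectionOnto y‖ ^ 2 ∈ T} =
      stdGaussian E {y | ∀ i, 0 ≤ ⟪d i, y⟫} * gammaMeasure (finrank ℝ K / 2) (1 / 2) T := by
  rw [ofPred_and, setOf_forall_inner_nonneg_eq_preimage_inter_preimage hd]
  refine stdGaussian_inter_norm_sq_orthogonalProjectionOnto_mem hK
    (measurableSet_setOf_forall_inner_nonneg _) (fun c hc z hz i ↦ ?_)
    (measurableSet_setOf_forall_inner_nonneg _) hT
  rw [real_inner_smul_right]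
  exact mul_nonneg hc.le (hz i)

end StdGaussian

section OrthogonalProjectionMatrix

variable {ι : Type*} [Fintype ι]

lemma pi_gaussianReal_preimage_toLp (A : Set (EuclideanSpace ℝ ι)) :
    (Measure.pi fun _ : ι ↦ gaussianReal 0 1) (WithLp.toLp 2 ⁻¹' A) =
      stdGaussian (EuclideanSpace ℝ ι) A := by
  rw [← map_pi_eq_stdGaussian]
  exact ((MeasurableEquiv.toLp 2 _).map_apply A).symm

variable [DecidableEq ι] {Q : Matrix ι ι ℝ}

lemma toEuclideanCLM_eq_starProjection_range (hsymm : Qᵀ = Q) (hidem : Q * Q = Q) :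
    toEuclideanCLM (𝕜 := ℝ) Q = (toEuclideanCLM (𝕜 := ℝ) Q).range.starProjection := by
  have hproj : IsStarProjection (toEuclideanCLM (𝕜 := ℝ) Q) :=
    IsStarProjection.map ⟨hidem, (conjTranspose_eq_transpose_of_trivial Q).trans hsymm⟩ _
  exact (isStarProjection_iff_eq_starProjection_range.1 hproj).2

lemma finrank_range_toEuclideanCLM (Q : Matrix ι ι ℝ) :
    finrank ℝ (toEuclideanCLM (𝕜 := ℝ) Q).range = Q.rank := by
  rw [Q.rank_eq_finrank_range_toLin (EuclideanSpace.basisFun ι ℝ).toBasis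
    (EuclideanSpace.basisFun ι ℝ).toBasis]
  rfl

lemma dotProduct_mulVec_eq_norm_sq_orthogonalProjectionOnto (hsymm : Qᵀ = Q)
    (hidem : Q * Q = Q) (y : EuclideanSpace ℝ ι) :
    y ⬝ᵥ Q *ᵥ y = ‖(toEuclideanCLM (𝕜 := ℝ) Q).range.orthogonalProjectionOnto y‖ ^ 2 := by
  rw [← inner_toEuclideanCLM,
    DFunLike.congr_fun (toEuclideanCLM_eq_starProjection_range hsymm hidem) y,
    Submodule.starProjection_apply, ← Submodule.inner_orthogonalProjectionOnto_eq_of_mem_right,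
    real_inner_self_eq_norm_sq]

end OrthogonalProjectionMatrix

end

theorem stmt19_general {ι κ : Type*} [Fintype ι] {Q : Matrix ι ι ℝ} (hQsym : Qᵀ = Q)
    (hQidem : Q * Q = Q) (hQrank : 1 ≤ Q.rank) {d : κ → ι → ℝ}
    (hd : ∀ i, Q *ᵥ d i = 0 ∨ Q *ᵥ d i = d i) {T : Set ℝ} (hT : MeasurableSet T) :
    (Measure.pi fun _ : ι ↦ gaussianReal 0 1)
        {y | (∀ i, 0 ≤ ∑ j, d i j * y j) ∧ y ⬝ᵥ Q *ᵥ y ∈ T} =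
      (Measure.pi fun _ : ι ↦ gaussianReal 0 1) {y | ∀ i, 0 ≤ ∑ j, d i j * y j} *
        gammaMeasure (Q.rank / 2) (1 / 2) T := by
  classical
  set K := (toEuclideanCLM (𝕜 := ℝ) Q).range
  have hproj : toEuclideanCLM (𝕜 := ℝ) Q = K.starProjection :=
    toEuclideanCLM_eq_starProjection_range hQsym hQidem
  have hK : K ≠ ⊥ := by
    rw [← Submodule.one_le_finrank_iff, finrank_range_toEuclideanCLM]
    exact hQrank
  have hdK (i : κ) : WithLp.toLp 2 (d i) ∈ K ∨ WithLp.toLp 2 (d i) ∈ Kᗮ := by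
    rw [← Submodule.starProjection_eq_self_iff, ← Submodule.starProjection_apply_eq_zero_iff,
      ← hproj, toEuclideanCLM_toLp]
    exact (hd i).symm.imp (congrArg _) (congrArg _)
  have hinner (i : κ) (y : ι → ℝ) :
      inner ℝ (WithLp.toLp 2 (d i)) (WithLp.toLp 2 y) = ∑ j, d i j * y j := by
    simp [PiLp.inner_apply, mul_comm]
  have hquad (y : ι → ℝ) : y ⬝ᵥ Q *ᵥ y = ‖K.orthogonalProjectionOnto (WithLp.toLp 2 y)‖ ^ 2 :=
    dotProduct_mulVec_eq_norm_sq_orthogonalProjectionOnto hQsym hQidem (WithLp.toLp 2 y)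
  have hlaw := stdGaussian_forall_inner_nonneg_and_norm_sq_mem hK hdK hT
  rw [← pi_gaussianReal_preimage_toLp, ← pi_gaussianReal_preimage_toLp,
    finrank_range_toEuclideanCLM] at hlaw
  simpa only [Set.preimage_ofPred_eq, hinner, ← hquad] using hlaw

/-- Lemma of the Appendix of the paper: if `μ` is the standard
Gaussian measure on `ℝ^k`, `Q` is a symmetric idempotent `k×k` matrix of rank
`r ≥ 1`, and `d_1,…,d_m` are vectors each lying in the kernel or in the range
of `Q` (i.e. `Q dᵢ = 0` or `Q dᵢ = dᵢ`), then conditionally on the cone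
`C = {y : ⟨dᵢ, y⟩ ≥ 0 ∀ i}` (of positive measure), the quadratic form
`yᵀ Q y` has a chi-square distribution with `r` degrees of freedom, i.e. a
Gamma distribution with shape `r/2` and rate `1/2`. -/
theorem stmt19 (k : ℕ) (hk : 1 ≤ k)
    (μ : Measure (Fin k → ℝ))
    (hμ : μ = Measure.pi fun _ : Fin k => gaussianReal 0 1)
    (Q : Matrix (Fin k) (Fin k) ℝ) (hQsym : Qᵀ = Q) (hQidem : Q * Q = Q)
    (r : ℕ) (hr : 1 ≤ r) (hrank : Q.rank = r)
    (m : ℕ) (d : Fin m → (Fin k → ℝ))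
    (hd : ∀ i, Q.mulVec (d i) = 0 ∨ Q.mulVec (d i) = d i)
    (C : Set (Fin k → ℝ))
    (hC : C = {y | ∀ i, 0 ≤ ∑ j, d i j * y j})
    (hμC : 0 < μ C) :
    ∀ x : ℝ, 0 ≤ x →
      μ {y ∈ C | y ⬝ᵥ Q.mulVec y ≤ x} / μ C =
        gammaMeasure ((r : ℝ) / 2) (1 / 2) (Set.Iic x) := by
  subst hμ hC hrank
  intro x _
  rw [eq_comm, ENNReal.eq_div_iff hμC.ne' (measure_ne_top _ _)]
  exact (stmt19_general hQsym hQidem hr hd measurableSet_Iic).symm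
end
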